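/- arXiv:2503.24289 — 3 statements merged into one kernel-verified Lean document; each statement's English description precedes it below -/
import Mathlib

section
/- (Performance Difference Upper Bound) Let S and A be finite nonempty types, p a probability mass function on S, π and π_g two policies with π strictly positive on A at every state, R_max ≥ 0, and f : S × A → ℝ with 0 ≤ f(s,a) ≤ R_max for all s, a. Define J(π) = ∑_{s} p(s) ∑_{a} π(a|s) · f(s,a). Then |J(π) − J(π_g)| ≤ R_max · √((1/2) · ∑_{s} p(s) · KL(π_g(·|s)‖π(·|s))). -/
/-!
Write `φ(P, Q) = P log (P / Q) - P + Q`, a nonnegative quantity whose sum over the actions is the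
KL divergence. The proof is that of Pinsker's inequality with the average over states built in.
Since `π(·|s)` and `πg(·|s)` have the same mass, `f` may be replaced by `f - Rmax / 2`, which is
bounded by `Rmax / 2` in absolute value. The pointwise estimate
`3 (Q - P)² ≤ (4 Q + 2 P) φ(P, Q)` (`three_mul_sq_sub_le`) then permits a single Cauchy–Schwarz
inequality over `S × A`, with weights `p (4 π + 2 πg) / 3`, of total mass `2`, and `p φ(πg, π)`,
whose total mass is the averaged KL divergence. The pointwise estimate is a rational lower bound
for the logarithm (`le_log_of_pos`); the difference of its two sides has derivative
`(x - 1)³ / (x² (x + 2)²)`, hence is minimal at `x = 1`, where it vanishes.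
-/

open scoped NNReal BigOperators

/-- Kullback–Leibler divergence between pmfs on a finite type,
summed over the support of `P`. -/
noncomputable def KL {A : Type*} [Fintype A] (P Q : A → ℝ≥0) : ℝ :=
  ∑ a ∈ Finset.univ.filter (fun a => 0 < P a), (P a : ℝ) * Real.log ((P a : ℝ) / (Q a : ℝ))

/-- Shannon entropy of a pmf on a finite type. -/
noncomputable def Hent {A : Type*} [Fintype A] (P : A → ℝ≥0) : ℝ :=
  -∑ a ∈ Finset.univ.filter (fun a => 0 < P a), (P a : ℝ) * Real.log (P a : ℝ)

/-- Total variation distance between pmfs on a finite type. -/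
noncomputable def TV {A : Type*} [Fintype A] (P Q : A → ℝ≥0) : ℝ :=
  (1 / 2) * ∑ a : A, |(P a : ℝ) - (Q a : ℝ)|

/-- Performance of a policy `π` under state distribution `p` and reward `f`. -/
noncomputable def Jperf {S A : Type*} [Fintype S] [Fintype A]
    (p : S → ℝ≥0) (f : S × A → ℝ) (π : S → A → ℝ≥0) : ℝ :=
  ∑ s : S, (p s : ℝ) * ∑ a : A, (π s a : ℝ) * f (s, a)

/-- A rational lower bound for the logarithm, agreeing with it to third order at `x = 1`. -/
lemma le_log_of_pos {x : ℝ} (hx : 0 < x) :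
    (x - 1) * (5 * x + 1) / (2 * x * (x + 2)) ≤ Real.log x := by
  set D : ℝ → ℝ := fun y => Real.log y - (y - 1) * (5 * y + 1) / (2 * y * (y + 2)) with hD
  have hder : ∀ y : ℝ, 0 < y → HasDerivAt D ((y - 1) ^ 3 / (y ^ 2 * (y + 2) ^ 2)) y := by
    intro y hy
    have hne : 2 * y * (y + 2) ≠ 0 := by positivity
    have hnum : HasDerivAt (fun y : ℝ => (y - 1) * (5 * y + 1))
        (1 * (5 * y + 1) + (y - 1) * (5 * 1)) y :=
      ((hasDerivAt_id' y).sub_const 1).mul (((hasDerivAt_id' y).const_mul 5).add_const 1)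
    have hden : HasDerivAt (fun y : ℝ => 2 * y * (y + 2))
        (2 * 1 * (y + 2) + 2 * y * 1) y :=
      ((hasDerivAt_id' y).const_mul 2).mul ((hasDerivAt_id' y).add_const 2)
    refine ((Real.hasDerivAt_log hy.ne').sub (hnum.div hden hne)).congr_deriv ?_
    field_simp
    ring
  have hmin : IsMinOn D (Set.Ioi 0) 1 := by
    refine isMinOn_Ioi_of_deriv (hder 1 one_pos).continuousAt
      (fun y hy => (hder y hy.1).differentiableAt.differentiableWithinAt)
      (fun y hy => (hder y (one_pos.trans hy)).differentiableAt.differentiableWithinAt)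
      (fun y hy => ?_) (fun y hy => ?_)
    · rw [(hder y hy.1).deriv]
      have : (y - 1) ^ 3 ≤ 0 := Odd.pow_nonpos (by decide) (by linarith [hy.2])
      exact div_nonpos_of_nonpos_of_nonneg this (by positivity)
    · rw [(hder y (one_pos.trans hy)).deriv]
      have : 0 ≤ (y - 1) ^ 3 := pow_nonneg (by linarith [Set.mem_Ioi.1 hy]) 3
      positivity
  have h := hmin (Set.mem_Ioi.2 hx)
  simp only [Set.mem_ofPred_eq, hD, Real.log_one, sub_self, zero_mul, zero_div] at h
  linarith

/-- The pointwise form of Pinsker's inequality. -/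
lemma three_mul_sq_sub_le {P Q : ℝ} (hP : 0 ≤ P) (hQ : 0 < Q) :
    3 * (Q - P) ^ 2 ≤ (4 * Q + 2 * P) * (P * Real.log (P / Q) - P + Q) := by
  obtain rfl | hP := hP.eq_or_lt
  · nlinarith [sq_nonneg Q]
  have hlog := mul_le_mul_of_nonneg_left (le_log_of_pos (div_pos hP hQ))
    (by positivity : 0 ≤ (4 * Q + 2 * P) * P)
  have heq : (4 * Q + 2 * P) * P *
      ((P / Q - 1) * (5 * (P / Q) + 1) / (2 * (P / Q) * (P / Q + 2)))
      = (P - Q) * (5 * P + Q) := by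
    field_simp
    ring
  nlinarith

/-- The support restriction in `KL` is immaterial, since `0 * log (0 / q) = 0`. -/
lemma KL_eq_sum {A : Type*} [Fintype A] (P Q : A → ℝ≥0) :
    KL P Q = ∑ a, (P a : ℝ) * Real.log ((P a : ℝ) / (Q a : ℝ)) := by
  refine Finset.sum_filter_of_ne fun a _ h => ?_
  exact pos_iff_ne_zero.2 fun h0 => h (by simp [h0])

theorem performance_difference_upper_bound
    {S A : Type*} [Fintype S] [Fintype A] [Nonempty S] [Nonempty A]
    (p : S → ℝ≥0) (hp : ∑ s : S, p s = 1)
    (π πg : S → A → ℝ≥0)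
    (hπ : ∀ s : S, ∑ a : A, π s a = 1) (hπg : ∀ s : S, ∑ a : A, πg s a = 1)
    (hpos : ∀ (s : S) (a : A), 0 < π s a)
    (Rmax : ℝ) (hR : 0 ≤ Rmax)
    (f : S × A → ℝ) (hf : ∀ (s : S) (a : A), 0 ≤ f (s, a) ∧ f (s, a) ≤ Rmax) :
    |Jperf p f π - Jperf p f πg| ≤
      Rmax * Real.sqrt ((1 / 2) * ∑ s : S, (p s : ℝ) * KL (πg s) (π s)) := by
  have hp' : ∑ s, (p s : ℝ) = 1 := by exact_mod_cast hp
  have hπ' : ∀ s, ∑ a, (π s a : ℝ) = 1 := fun s => by exact_mod_cast hπ s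
  have hπg' : ∀ s, ∑ a, (πg s a : ℝ) = 1 := fun s => by exact_mod_cast hπg s
  have hpt : ∀ s a, 3 * ((π s a : ℝ) - πg s a) ^ 2 ≤ (4 * (π s a : ℝ) + 2 * πg s a) *
      ((πg s a : ℝ) * Real.log ((πg s a : ℝ) / π s a) - πg s a + π s a) := fun s a =>
    three_mul_sq_sub_le (πg s a).2 (NNReal.coe_pos.2 (hpos s a))
  -- Centring `f` at `Rmax / 2` is free because both policies have mass one.
  have hdiff : Jperf p f π - Jperf p f πg =
      ∑ x : S × A, (p x.1 : ℝ) * (((π x.1 x.2 : ℝ) - πg x.1 x.2) * (f x - Rmax / 2)) := by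
    rw [Fintype.sum_prod_type, Jperf, Jperf, ← Finset.sum_sub_distrib]
    refine Finset.sum_congr rfl fun s _ => ?_
    simp only [← Finset.mul_sum, mul_sub, sub_mul, Finset.sum_sub_distrib, ← Finset.sum_mul,
      hπ', hπg']
    ring
  have hw : ∑ x : S × A, (p x.1 : ℝ) * ((4 * (π x.1 x.2 : ℝ) + 2 * πg x.1 x.2) / 3) = 2 := by
    rw [Fintype.sum_prod_type]
    simp only [← Finset.mul_sum, ← Finset.sum_div, Finset.sum_add_distrib, hπ', hπg',
      ← Finset.sum_mul, hp']
    norm_num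
  have hkl : ∑ x : S × A, (Rmax / 2) ^ 2 * ((p x.1 : ℝ) * ((πg x.1 x.2 : ℝ) *
      Real.log ((πg x.1 x.2 : ℝ) / π x.1 x.2) - πg x.1 x.2 + π x.1 x.2)) =
      (Rmax / 2) ^ 2 * ∑ s, (p s : ℝ) * KL (πg s) (π s) := by
    rw [← Finset.mul_sum, Fintype.sum_prod_type]
    simp only [← Finset.mul_sum, Finset.sum_add_distrib, Finset.sum_sub_distrib, hπ', hπg',
      KL_eq_sum, sub_add_cancel]
  have hφ : ∀ s a, 0 ≤ (πg s a : ℝ) * Real.log ((πg s a : ℝ) / π s a) - πg s a + π s a := by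
    intro s a
    have h1 : 0 < (π s a : ℝ) := NNReal.coe_pos.2 (hpos s a)
    have h2 : (0 : ℝ) ≤ πg s a := (πg s a).2
    exact nonneg_of_mul_nonneg_right ((by positivity : (0 : ℝ) ≤ _).trans (hpt s a))
      (by positivity)
  have hCS := Finset.sum_sq_le_sum_mul_sum_of_sq_le_mul Finset.univ
    (r := fun x : S × A =>
      (p x.1 : ℝ) * (((π x.1 x.2 : ℝ) - πg x.1 x.2) * (f x - Rmax / 2)))
    (f := fun x => (p x.1 : ℝ) * ((4 * (π x.1 x.2 : ℝ) + 2 * πg x.1 x.2) / 3))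
    (g := fun x => (Rmax / 2) ^ 2 * ((p x.1 : ℝ) * ((πg x.1 x.2 : ℝ) *
      Real.log ((πg x.1 x.2 : ℝ) / π x.1 x.2) - πg x.1 x.2 + π x.1 x.2)))
    (fun x _ => by positivity)
    (fun x _ => mul_nonneg (sq_nonneg _) (mul_nonneg (p x.1).2 (hφ x.1 x.2)))
    (fun x _ => by
      obtain ⟨s, a⟩ := x
      have hfc : (f (s, a) - Rmax / 2) ^ 2 ≤ (Rmax / 2) ^ 2 :=
        sq_le_sq' (by linarith [(hf s a).1]) (by linarith [(hf s a).2])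
      have h := mul_le_mul (hpt s a) hfc (sq_nonneg _)
        ((by positivity : (0 : ℝ) ≤ _).trans (hpt s a))
      have h' := mul_le_mul_of_nonneg_left h (by positivity : 0 ≤ (p s : ℝ) ^ 2 / 3)
      dsimp only
      linarith)
  rw [← hdiff, hw, hkl] at hCS
  have hKL : 0 ≤ (1 / 2) * ∑ s, (p s : ℝ) * KL (πg s) (π s) := by
    refine mul_nonneg (by norm_num) (Finset.sum_nonneg fun s _ => mul_nonneg (p s).2 ?_)
    have h := Finset.sum_nonneg fun a (_ : a ∈ Finset.univ) => hφ s a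
    rwa [Finset.sum_add_distrib, Finset.sum_sub_distrib, hπ', hπg', sub_add_cancel,
      ← KL_eq_sum] at h
  refine abs_le_of_sq_le_sq ?_ (by positivity)
  rw [mul_pow, Real.sq_sqrt hKL]
  linarith
end

section
/- (SFT performance is within O(√κ) of the teacher) Let S and A be finite nonempty types, p a probability mass function on S, π_g a policy (the teacher), π_SFT a policy strictly positive on A at every state, R_max ≥ 0, and f : S × A → ℝ with 0 ≤ f(s,a) ≤ R_max for all s, a. Define J(π) = ∑_{s} p(s) ∑_{a} π(a|s) · f(s,a) and κ = ∑_{s} p(s) · KL(π_g(·|s)‖π_SFT(·|s)). Then J(π_SFT) ≥ J(π_g) − R_max · √(κ/2). -/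
/-!
For every real `t` and every state, the Donsker–Varadhan inequality applied to the tilt `t * f`,
with the log-moment generating function under `π_SFT` bounded by Hoeffding's lemma, gives
`t * (E_{π_g} f - E_{π_SFT} f) ≤ KL(π_g ‖ π_SFT) + Rmax ^ 2 * t ^ 2 / 8` (`mul_sub_le_KL_add`).
Averaging over `p` yields `t * Δ ≤ κ + Rmax ^ 2 * t ^ 2 / 8` for all `t`, where
`Δ = J(π_g) - J(π_SFT)`. A quadratic in `t` that is nonnegative everywhere has nonpositive
discriminant, hence `Δ ^ 2 ≤ Rmax ^ 2 * κ / 2`. Because `t` is optimised only after averaging,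
no Jensen inequality for the square root is needed.
-/

open scoped NNReal BigOperators

/-- Hoeffding's lemma for a finite probability mass function, as an instance of the
measure-theoretic version. -/
lemma sum_mul_exp_le {A : Type*} [Fintype A] (Q : A → ℝ≥0) (hQ : ∑ a, Q a = 1)
    (R : ℝ) (g : A → ℝ) (hg : ∀ a, 0 ≤ g a ∧ g a ≤ R) (t : ℝ) :
    ∑ a, (Q a : ℝ) * Real.exp (t * (g a - ∑ b, (Q b : ℝ) * g b)) ≤
      Real.exp (R ^ 2 * t ^ 2 / 8) := by
  let _ : MeasurableSpace A := ⊤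
  let μ : PMF A := PMF.ofFintype (fun a => (Q a : ENNReal)) (by exact_mod_cast hQ)
  have hsum (h : A → ℝ) : ∫ a, h a ∂μ.toMeasure = ∑ a, (Q a : ℝ) * h a := by
    rw [PMF.integral_eq_sum]
    simp [μ]
  have h := (ProbabilityTheory.hasSubgaussianMGF_of_mem_Icc (μ := μ.toMeasure) (X := g)
    (a := 0) (b := R) (measurable_from_top.aemeasurable)
    (Filter.Eventually.of_forall hg)).mgf_le t
  rw [ProbabilityTheory.mgf, hsum, hsum] at h
  refine h.trans_eq ?_
  congr 1
  simp only [NNReal.coe_pow, NNReal.coe_div, coe_nnnorm, Real.norm_eq_abs, sub_zero,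
    NNReal.coe_ofNat, div_pow, sq_abs]
  ring

/-- The pointwise inequality behind Donsker–Varadhan: `log x ≤ x - 1` at `x = q * exp u / r`. -/
lemma mul_le_mul_log_add {r q : ℝ} (hr : 0 < r) (hq : 0 < q) (u : ℝ) :
    r * u ≤ r * Real.log (r / q) + q * Real.exp u - r := by
  have h := Real.log_le_sub_one_of_pos (x := q * Real.exp u / r) (by positivity)
  rw [Real.log_div (by positivity) hr.ne', Real.log_mul hq.ne' (Real.exp_pos u).ne',
    Real.log_exp] at h
  rw [Real.log_div hr.ne' hq.ne']
  have h2 := mul_le_mul_of_nonneg_left h hr.le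
  have h3 : r * (q * Real.exp u / r - 1) = q * Real.exp u - r := by field_simp
  rw [h3] at h2
  linarith

/-- Donsker–Varadhan combined with Hoeffding's lemma; optimising over `t` would give
Pinsker's inequality in its dual form. -/
lemma mul_sub_le_KL_add {A : Type*} [Fintype A] (P Q : A → ℝ≥0) (hP : ∑ a, P a = 1)
    (hQ : ∑ a, Q a = 1) (hpos : ∀ a, 0 < Q a)
    (R : ℝ) (g : A → ℝ) (hg : ∀ a, 0 ≤ g a ∧ g a ≤ R) (t : ℝ) :
    t * (∑ a, (P a : ℝ) * g a - ∑ a, (Q a : ℝ) * g a) ≤ KL P Q + R ^ 2 * t ^ 2 / 8 := by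
  set m := ∑ a, (Q a : ℝ) * g a with hm
  set c := R ^ 2 * t ^ 2 / 8 with hc
  have hP' : ∑ a, (P a : ℝ) = 1 := by exact_mod_cast hP
  -- Shifting the exponent by `c` normalises the tilted mass of `Q` to at most one.
  have hM : ∑ a, (Q a : ℝ) * Real.exp (t * (g a - m) - c) ≤ 1 := by
    have h := sum_mul_exp_le Q hQ R g hg t
    rw [← hm, ← hc] at h
    simp_rw [Real.exp_sub, ← mul_div_assoc]
    rw [← Finset.sum_div]
    exact (div_le_one (Real.exp_pos c)).2 h
  have hpt (a : A) : (P a : ℝ) * (t * (g a - m) - c) ≤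
      (if 0 < P a then (P a : ℝ) * Real.log ((P a : ℝ) / (Q a : ℝ)) else 0)
        + (Q a : ℝ) * Real.exp (t * (g a - m) - c) - P a := by
    split_ifs with h
    · exact mul_le_mul_log_add (NNReal.coe_pos.2 h) (NNReal.coe_pos.2 (hpos a)) _
    · have h0 : P a = 0 := by simpa using h
      simp only [h0, NNReal.coe_zero]
      have := hpos a
      simp only [zero_mul, zero_add, sub_zero]
      positivity
  have hs := Finset.sum_le_sum fun a (_ : a ∈ Finset.univ) => hpt a
  rw [Finset.sum_sub_distrib, Finset.sum_add_distrib, ← Finset.sum_filter, hP'] at hs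
  have hl : ∑ a, (P a : ℝ) * (t * (g a - m) - c) = t * (∑ a, (P a : ℝ) * g a - m) - c := by
    have : ∀ a, (P a : ℝ) * (t * (g a - m) - c) = t * ((P a : ℝ) * g a) - (t * m + c) * P a :=
      fun a => by ring
    simp_rw [this]
    rw [Finset.sum_sub_distrib, ← Finset.mul_sum, ← Finset.mul_sum, hP']
    ring
  rw [hl] at hs
  unfold KL
  linarith

theorem sft_performance_within_sqrt_kappa
    {S A : Type*} [Fintype S] [Fintype A] [Nonempty S] [Nonempty A]
    (p : S → ℝ≥0) (hp : ∑ s : S, p s = 1)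
    (πg πSFT : S → A → ℝ≥0)
    (hπg : ∀ s : S, ∑ a : A, πg s a = 1) (hπSFT : ∀ s : S, ∑ a : A, πSFT s a = 1)
    (hpos : ∀ (s : S) (a : A), 0 < πSFT s a)
    (Rmax : ℝ) (hR : 0 ≤ Rmax)
    (f : S × A → ℝ) (hf : ∀ (s : S) (a : A), 0 ≤ f (s, a) ∧ f (s, a) ≤ Rmax)
    (κ : ℝ) (hκ : κ = ∑ s : S, (p s : ℝ) * KL (πg s) (πSFT s)) :
    Jperf p f πSFT ≥ Jperf p f πg - Rmax * Real.sqrt (κ / 2) := by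
  have hp' : ∑ s, (p s : ℝ) = 1 := by exact_mod_cast hp
  set Δ := Jperf p f πg - Jperf p f πSFT with hΔ
  have key (t : ℝ) : t * Δ ≤ κ + Rmax ^ 2 * t ^ 2 / 8 := by
    have hs := Finset.sum_le_sum fun s (_ : s ∈ Finset.univ) =>
      mul_le_mul_of_nonneg_left (mul_sub_le_KL_add (πg s) (πSFT s) (hπg s) (hπSFT s) (hpos s)
        Rmax (fun a => f (s, a)) (hf s) t) (p s).coe_nonneg
    simp_rw [mul_add, mul_left_comm _ t, mul_sub] at hs
    rw [Finset.sum_add_distrib, ← hκ, ← Finset.sum_mul, hp', one_mul,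
      Finset.sum_sub_distrib, ← Finset.mul_sum, ← Finset.mul_sum, ← mul_sub] at hs
    exact hs
  have hd : discrim (Rmax ^ 2 / 8) (-Δ) κ ≤ 0 :=
    discrim_le_zero fun t => by linarith [key t]
  have hsq : Δ ^ 2 ≤ Rmax ^ 2 * (κ / 2) := by
    unfold discrim at hd
    linarith
  have hle : Δ ≤ Rmax * Real.sqrt (κ / 2) := by
    have h := Real.le_sqrt_of_sq_le hsq
    rwa [Real.sqrt_mul (sq_nonneg _), Real.sqrt_sq hR] at h
  linarith
end

section
/- (RL beats the teacher up to the SFT KL gap) Let S and A be finite nonempty types, p a probability mass function on S, R_max ≥ 0, and f : S × A → ℝ with 0 ≤ f(s,a) ≤ R_max for all s, a. Define J(π) = ∑_{s} p(s) ∑_{a} π(a|s) · f(s,a). Let Π be a set of policies, let π_g be a policy (the teacher), let π_SFT ∈ Π be strictly positive on A at every state with κ = ∑_{s} p(s) · KL(π_g(·|s)‖π_SFT(·|s)), and let π_RL ∈ Π satisfy J(π_RL) ≥ J(π) for every π ∈ Π. Then J(π_RL) ≥ J(π_g) − R_max · √(κ/2). -/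
/-!
The SFT policy lies in the class, so it suffices to compare it with the teacher. Write `P` for the
teacher and `Q` for the SFT policy at a fixed state. The Gibbs (Donsker-Varadhan) variational bound
together with Hoeffding's lemma for the reward, which takes values in `[0, R]`, gives
`t (E_P f - E_Q f) ≤ KL(P‖Q) + t² R² / 8` for every real `t` (`kl_linear_bound`). This bound is
averaged over states before `t` is optimized: nonnegativity of the resulting quadratic in `t`
forces its discriminant to be nonpositive, which is `(J(π_g) - J(π_SFT))² ≤ R² κ / 2`. Averaging
first makes Jensen's inequality for the square root unnecessary, and the discriminant also covers
`R = 0`.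
-/

open scoped NNReal BigOperators

/-- Hoeffding's lemma for a probability mass function on a finite type. -/
lemma hoeffding_sum {A : Type*} [Fintype A] (Q : A → ℝ≥0) (hQ : ∑ a, Q a = 1)
    (R : ℝ) (hR : 0 ≤ R) (g : A → ℝ) (hg : ∀ a, 0 ≤ g a ∧ g a ≤ R) (t : ℝ) :
    ∑ a, (Q a : ℝ) * Real.exp (t * (g a - ∑ b, (Q b : ℝ) * g b)) ≤
      Real.exp (t ^ 2 * R ^ 2 / 8) := by
  let : MeasurableSpace A := ⊤
  have : MeasurableSingletonClass A := ⟨fun _ => trivial⟩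
  have hQ' : ∑ a, (Q a : ENNReal) = 1 := by exact_mod_cast hQ
  let q : PMF A := PMF.ofFintype (fun a => (Q a : ENNReal)) hQ'
  have hint : ∀ h : A → ℝ, ∫ a, h a ∂q.toMeasure = ∑ a, (Q a : ℝ) * h a := by
    intro h
    rw [PMF.integral_eq_sum]
    simp [q]
  have H := (ProbabilityTheory.hasSubgaussianMGF_of_mem_Icc (μ := q.toMeasure) (X := g)
    (a := 0) (b := R) (measurable_of_finite g).aemeasurable
    (Filter.Eventually.of_forall fun a => ⟨(hg a).1, (hg a).2⟩)).mgf_le t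
  simp only [ProbabilityTheory.mgf, hint] at H
  refine H.trans (Real.exp_le_exp.mpr (le_of_eq ?_))
  simp [abs_of_nonneg hR]
  ring

/-- Exponential-tilting form of Pinsker's inequality, before optimizing over the tilt `t`. -/
lemma kl_linear_bound {A : Type*} [Fintype A] (P Q : A → ℝ≥0) (hP : ∑ a, P a = 1)
    (hQ : ∑ a, Q a = 1) (hpos : ∀ a, 0 < Q a)
    (R : ℝ) (hR : 0 ≤ R) (g : A → ℝ) (hg : ∀ a, 0 ≤ g a ∧ g a ≤ R) (t : ℝ) :
    t * (∑ a, (P a : ℝ) * g a - ∑ a, (Q a : ℝ) * g a) ≤ KL P Q + t ^ 2 * R ^ 2 / 8 := by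
  have hP' : ∑ a, (P a : ℝ) = 1 := by exact_mod_cast hP
  have hH := hoeffding_sum Q hQ R hR g hg t
  set m := ∑ a, (Q a : ℝ) * g a
  set c := t ^ 2 * R ^ 2 / 8
  have hKL : KL P Q = ∑ a, (P a : ℝ) * Real.log ((P a : ℝ) / (Q a : ℝ)) := by
    unfold KL
    apply Finset.sum_filter_of_ne
    intro a _ h
    exact pos_iff_ne_zero.mpr fun h0 => h (by simp [h0])
  -- `log x ≤ x - 1` applied to the density ratio of the tilted measure `Q e^{t(g - m) - c}` to `P`
  have key : ∀ a, (P a : ℝ) * (t * (g a - m) - c - Real.log ((P a : ℝ) / (Q a : ℝ))) ≤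
      (Q a : ℝ) * Real.exp (t * (g a - m)) * Real.exp (-c) - P a := by
    intro a
    have hq : (0 : ℝ) < Q a := by exact_mod_cast hpos a
    rcases eq_or_lt_of_le (P a).coe_nonneg with h0 | hp
    · rw [← h0]
      simp only [zero_mul, sub_zero]
      positivity
    · have h := Real.add_one_le_exp
        (t * (g a - m) - c - Real.log ((P a : ℝ) / (Q a : ℝ)))
      rw [Real.exp_sub, Real.exp_log (div_pos hp hq), sub_eq_add_neg _ c, Real.exp_add] at h
      have h2 := mul_le_mul_of_nonneg_left h hp.le
      have h3 : (P a : ℝ) * (Real.exp (t * (g a - m)) * Real.exp (-c) / ((P a : ℝ) / (Q a : ℝ)))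
          = (Q a : ℝ) * Real.exp (t * (g a - m)) * Real.exp (-c) := by
        field_simp
      rw [h3] at h2
      linarith
  have hsum := Finset.sum_le_sum fun a (_ : a ∈ Finset.univ) => key a
  have hl : ∑ a, (P a : ℝ) * (t * (g a - m) - c - Real.log ((P a : ℝ) / (Q a : ℝ))) =
      t * (∑ a, (P a : ℝ) * g a - m) - c - KL P Q := by
    have e : ∀ a, (P a : ℝ) * (t * (g a - m) - c - Real.log ((P a : ℝ) / (Q a : ℝ))) =
        t * ((P a : ℝ) * g a) - (P a : ℝ) * (t * m + c)
          - (P a : ℝ) * Real.log ((P a : ℝ) / (Q a : ℝ)) := fun a => by ring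
    simp only [e, Finset.sum_sub_distrib, ← Finset.mul_sum, ← Finset.sum_mul, hP', ← hKL]
    ring
  rw [hl, Finset.sum_sub_distrib, ← Finset.sum_mul, hP'] at hsum
  have h1 := mul_le_mul_of_nonneg_right hH (Real.exp_pos (-c)).le
  rw [← Real.exp_add, add_neg_cancel, Real.exp_zero] at h1
  linarith

theorem rl_beats_teacher_up_to_kl_gap
    {S A : Type*} [Fintype S] [Fintype A] [Nonempty S] [Nonempty A]
    (p : S → ℝ≥0) (hp : ∑ s : S, p s = 1)
    (Rmax : ℝ) (hR : 0 ≤ Rmax)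
    (f : S × A → ℝ) (hf : ∀ (s : S) (a : A), 0 ≤ f (s, a) ∧ f (s, a) ≤ Rmax)
    (Pols : Set (S → A → ℝ≥0))
    (hPols : ∀ π ∈ Pols, ∀ s : S, ∑ a : A, π s a = 1)
    (πg : S → A → ℝ≥0) (hπg : ∀ s : S, ∑ a : A, πg s a = 1)
    (πSFT : S → A → ℝ≥0) (hSFT : πSFT ∈ Pols)
    (hpos : ∀ (s : S) (a : A), 0 < πSFT s a)
    (κ : ℝ) (hκ : κ = ∑ s : S, (p s : ℝ) * KL (πg s) (πSFT s))
    (πRL : S → A → ℝ≥0) (hRL : πRL ∈ Pols)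
    (hmax : ∀ π ∈ Pols, Jperf p f πRL ≥ Jperf p f π) :
    Jperf p f πRL ≥ Jperf p f πg - Rmax * Real.sqrt (κ / 2) := by
  have hp' : ∑ s, (p s : ℝ) = 1 := by exact_mod_cast hp
  have hS := hmax πSFT hSFT
  have hquad : ∀ t : ℝ, t * (Jperf p f πg - Jperf p f πSFT) ≤ κ + t ^ 2 * Rmax ^ 2 / 8 := by
    intro t
    have h := Finset.sum_le_sum fun s (_ : s ∈ Finset.univ) =>
      mul_le_mul_of_nonneg_left
        (kl_linear_bound (πg s) (πSFT s) (hπg s) (hPols _ hSFT s) (hpos s) Rmax hR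
          (fun a => f (s, a)) (hf s) t) (p s).coe_nonneg
    simp only [mul_add, Finset.sum_add_distrib, ← Finset.sum_mul, hp', one_mul, ← hκ] at h
    refine le_trans (le_of_eq ?_) h
    simp only [Jperf, ← Finset.sum_sub_distrib, Finset.mul_sum]
    refine Finset.sum_congr rfl fun s _ => ?_
    refine Finset.sum_congr rfl fun a _ => ?_
    ring
  set D := Jperf p f πg - Jperf p f πSFT with hD
  have hdisc := discrim_le_zero (a := Rmax ^ 2 / 8) (b := -D) (c := κ) fun t => by
    linarith [hquad t]
  have hsq : D ^ 2 ≤ Rmax ^ 2 * (κ / 2) := by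
    unfold discrim at hdisc
    linarith
  have hle := Real.le_sqrt_of_sq_le hsq
  rw [Real.sqrt_mul (sq_nonneg _), Real.sqrt_sq hR] at hle
  linarith
end
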